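/- For any fixed x ∈ (0,1] and natural number j ≥ 0, the function ρ ↦ (ρ/(jx+ρ)) · binom(ρ/x + j, ρ) is monotone nondecreasing on (0,1), where binom denotes the generalized binomial coefficient. -/

import Mathlib

noncomputable def genBinom (x y : ℝ) : ℝ :=
  Real.Gamma (x + 1) / (Real.Gamma (y + 1) * Real.Gamma (x - y + 1))

/-!
Both factors are nonnegative and nondecreasing in `ρ`. For the binomial coefficient, write
`ρ / x + j = ρ + v` with `v = (x⁻¹ - 1) * ρ + j`, which is nondecreasing in `ρ` because `x ≤ 1`.
The quantity `genBinom (u + v) u = Γ(u + v + 1) / (Γ(u + 1) Γ(v + 1))` is symmetric in `u` and `v`,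
and it is nondecreasing in each of them because the log-convexity of `Γ` makes
`s ↦ Γ(s + v) / Γ(s)` nondecreasing for `v ≥ 0`.
-/

open Set

section Convex

variable {𝕜 E β : Type*} [Semiring 𝕜] [PartialOrder 𝕜] [AddCommGroup E] [Module 𝕜 E]
  [AddCommMonoid β] [PartialOrder β] [IsOrderedAddMonoid β] [Module 𝕜 β] {s : Set E} {f : E → β}

theorem map_add_map_add_sub_le_of_convexOn (hf : ConvexOn 𝕜 s f) {x y z : E} (hx : x ∈ s)
    (hz : z ∈ s) (hy : y ∈ segment 𝕜 x z) : f y + f (x + z - y) ≤ f x + f z := by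
  obtain ⟨a, b, ha, hb, hab, rfl⟩ := hy
  have reflection : x + z - (a • x + b • z) = b • x + a • z := by
    rw [sub_eq_iff_eq_add]
    calc x + z = (a + b) • x + (a + b) • z := by rw [hab, one_smul, one_smul]
      _ = b • x + a • z + (a • x + b • z) := by simp only [add_smul]; abel
  calc f (a • x + b • z) + f (x + z - (a • x + b • z))
      ≤ (a • f x + b • f z) + (b • f x + a • f z) := by
        rw [reflection]
        exact add_le_add (hf.2 hx hz ha hb hab) (hf.2 hx hz hb ha (by rwa [add_comm]))
    _ = (a + b) • f x + (a + b) • f z := by simp only [add_smul]; abel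
    _ = f x + f z := by rw [hab, one_smul, one_smul]

end Convex

theorem monotoneOn_Gamma_add_div_Gamma {v : ℝ} (hv : 0 ≤ v) :
    MonotoneOn (fun s => Real.Gamma (s + v) / Real.Gamma s) (Ioi 0) := by
  intro s (hs : 0 < s) t (ht : 0 < t) hst
  have hsv : 0 < Real.Gamma (s + v) := Real.Gamma_pos_of_pos (by positivity)
  have htv : 0 < Real.Gamma (t + v) := Real.Gamma_pos_of_pos (by positivity)
  have hΓs := Real.Gamma_pos_of_pos hs
  have hΓt := Real.Gamma_pos_of_pos ht
  have hmem : s + v ∈ segment ℝ s (t + v) := by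
    rw [segment_eq_Icc (by linarith)]
    constructor <;> linarith
  have log_le : Real.log (Real.Gamma (s + v)) + Real.log (Real.Gamma t)
      ≤ Real.log (Real.Gamma s) + Real.log (Real.Gamma (t + v)) := by
    simpa [show s + (t + v) - (s + v) = t by ring] using
      map_add_map_add_sub_le_of_convexOn Real.convexOn_log_Gamma hs
        (show 0 < t + v by positivity) hmem
  rw [← Real.log_mul hsv.ne' hΓt.ne', ← Real.log_mul hΓs.ne' htv.ne',
    Real.log_le_log_iff (by positivity) (by positivity)] at log_le
  rw [div_le_div_iff₀ hΓs hΓt]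
  linarith

theorem monotoneOn_div_const_add {c : ℝ} (hc : 0 ≤ c) :
    MonotoneOn (fun r => r / (c + r)) (Ioi (-c)) := by
  intro r hr s hs hrs
  rw [mem_Ioi] at hr hs
  rw [div_le_div_iff₀ (by linarith) (by linarith)]
  nlinarith

theorem genBinom_nonneg {a b : ℝ} (ha : -1 ≤ a) (hb : -1 ≤ b) (hba : b ≤ a + 1) :
    0 ≤ genBinom a b :=
  div_nonneg (Real.Gamma_nonneg_of_nonneg (by linarith))
    (mul_nonneg (Real.Gamma_nonneg_of_nonneg (by linarith))
      (Real.Gamma_nonneg_of_nonneg (by linarith)))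

theorem genBinom_add_symm (u v : ℝ) : genBinom (u + v) u = genBinom (v + u) v := by
  simp only [genBinom, add_sub_cancel_left, add_comm v u, add_sub_cancel_right, mul_comm]

theorem monotoneOn_genBinom_add {v : ℝ} (hv : 0 ≤ v) :
    MonotoneOn (fun u => genBinom (u + v) u) (Ioi (-1)) := by
  intro u hu u' hu' huu'
  rw [mem_Ioi] at hu hu'
  have genBinom_eq (w : ℝ) : genBinom (w + v) w
      = Real.Gamma (w + 1 + v) / Real.Gamma (w + 1) / Real.Gamma (v + 1) := by
    rw [genBinom, add_sub_cancel_left, div_div, add_right_comm]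
  simp only [genBinom_eq]
  exact div_le_div_of_nonneg_right
    (monotoneOn_Gamma_add_div_Gamma hv (by grind) (by grind) (by gcongr))
    (Real.Gamma_nonneg_of_nonneg (by positivity))

theorem genBinom_add_le_genBinom_add {u u' v v' : ℝ} (hu : 0 ≤ u) (huu' : u ≤ u') (hv : 0 ≤ v)
    (hvv' : v ≤ v') : genBinom (u + v) u ≤ genBinom (u' + v') u' :=
  calc genBinom (u + v) u
      ≤ genBinom (u' + v) u' := monotoneOn_genBinom_add hv (by grind) (by grind) huu'
    _ = genBinom (v + u') v := genBinom_add_symm u' v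
    _ ≤ genBinom (v' + u') v' :=
      monotoneOn_genBinom_add (hu.trans huu') (by grind) (by grind) hvv'
    _ = genBinom (u' + v') u' := genBinom_add_symm v' u'

theorem monotoneOn_genBinom_div_add {x j : ℝ} (hx : x ∈ Ioc 0 1) (hj : 0 ≤ j) :
    MonotoneOn (fun ρ => genBinom (ρ / x + j) ρ) (Ici 0) := by
  intro ρ (hρ : 0 ≤ ρ) σ _ hρσ
  have split (r : ℝ) : r / x + j = r + ((x⁻¹ - 1) * r + j) := by ring
  have hx' : 0 ≤ x⁻¹ - 1 := sub_nonneg.2 ((one_le_inv₀ hx.1).2 hx.2)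
  simp only [split]
  exact genBinom_add_le_genBinom_add hρ hρσ (by positivity) (by gcongr)

theorem kappa_factor_monotone_general {x j : ℝ} (hx : x ∈ Ioc 0 1) (hj : 0 ≤ j) :
    MonotoneOn (fun ρ => ρ / (j * x + ρ) * genBinom (ρ / x + j) ρ) (Ioi 0) := by
  have hx0 : 0 < x := hx.1
  have hjx : 0 ≤ j * x := by positivity
  refine MonotoneOn.mul
    ((monotoneOn_div_const_add hjx).mono (Ioi_subset_Ioi (neg_nonpos.2 hjx)))
    ((monotoneOn_genBinom_div_add hx hj).mono Ioi_subset_Ici_self) ?_ ?_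
  · intro ρ (hρ : 0 < ρ)
    positivity
  · intro ρ (hρ : 0 < ρ)
    have hρx : ρ ≤ ρ / x := le_div_self hρ.le hx0 hx.2
    exact genBinom_nonneg (by linarith) (by linarith) (by linarith)

theorem kappa_factor_monotone (x : ℝ) (hx : x ∈ Set.Ioc (0:ℝ) 1) (j : ℕ) :
    MonotoneOn (fun ρ : ℝ => ρ / (j * x + ρ) * genBinom (ρ / x + j) ρ)
      (Set.Ioo 0 1) :=
  (kappa_factor_monotone_general hx j.cast_nonneg).mono Ioo_subset_Ioi_self
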